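/- arXiv:2111.03771 — 4 statements merged into one kernel-verified Lean document; each statement's English description precedes it below -/
import Mathlib

section
/- Let d ≥ 2 and fix l ∈ [1,n]. Write the characteristic polynomial of B as p_B(t) = det(t·I − B) = Σ_{k=0}^n c_k t^k with c_k ∈ R and c_n = 1. Then for every 0 ≤ k ≤ n−1, c_k = d^{−(n−k)} · J_{α(n−k,l)}; in particular c_k ∈ J_{d,n} for 0 ≤ k ≤ n−1. -/
open MvPolynomial Matrix

noncomputable section

/-- `R n` is the polynomial ring `ℚ[a_{i,j} : 1 ≤ i,j ≤ n]`. -/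
abbrev JacR (n : ℕ) : Type := MvPolynomial (Fin n × Fin n) ℚ

/-- The `i`-th component of the degree `d`-linear map:
`f_i = x_i - (∑_j a_{i,j} x_j)^d`. -/
def degLinMap (n d : ℕ) (i : Fin n) : MvPolynomial (Fin n) (JacR n) :=
  X i - (∑ j : Fin n, C (X (i, j) : JacR n) * X j) ^ d

/-- The differential `D(f)`, with `(D(f))_{i,j} = ∂f_i/∂x_j`. -/
def diffMat (n d : ℕ) : Matrix (Fin n) (Fin n) (MvPolynomial (Fin n) (JacR n)) :=
  fun i j => pderiv j (degLinMap n d i)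

/-- The Jacobian `Jac(f) = det(D(f))`. -/
def jacPoly (n d : ℕ) : MvPolynomial (Fin n) (JacR n) := (diffMat n d).det

/-- The ideal `J_{d,n}` generated by the coefficients `J_α` of `Jac(f)` for all
nonzero multi-degrees `α`. -/
def Jideal (n d : ℕ) : Ideal (JacR n) :=
  Ideal.span {r : JacR n | ∃ α : Fin n →₀ ℕ, α ≠ 0 ∧ coeff α (jacPoly n d) = r}

/-- The matrix `B` with entries `B_{i,j} = a_{i,j} · a_{i,l}^{d-1}`. -/
def Bmat (n d : ℕ) (l : Fin n) : Matrix (Fin n) (Fin n) (JacR n) :=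
  fun i j => X (i, j) * X (i, l) ^ (d - 1)

/-!
Setting every `x_j` with `j ≠ l` to zero turns `D(f)` into `1 - d t^(d-1) B`, where `t = x_l`. So
the part of `Jac(f)` supported on the `l`-th axis is the reversed characteristic polynomial of `B`
evaluated at `d t^(d-1)`, and its coefficient at `t^(m(d-1))` is `d^m c_{n-m}`.
-/

section AxisRestriction

variable {σ R : Type*} [DecidableEq σ] [CommSemiring R]

/-- Restriction of a polynomial to the `l`-th coordinate axis: the variable `x_l` becomes the
variable of a univariate polynomial and all other variables become zero. -/
def axisRestriction (l : σ) : MvPolynomial σ R →ₐ[R] Polynomial R :=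
  aeval (Pi.single l Polynomial.X)

lemma axisRestriction_X (l j : σ) :
    axisRestriction l (X j : MvPolynomial σ R) =
      (Pi.single l Polynomial.X : σ → Polynomial R) j :=
  aeval_X _ j

lemma axisRestriction_C (l : σ) (r : R) : axisRestriction l (C r) = Polynomial.C r :=
  aeval_C _ r

lemma axisRestriction_linearForm [Fintype σ] (l : σ) (a : σ → R) :
    axisRestriction l (∑ j, C (a j) * X j) = Polynomial.C (a l) * Polynomial.X := by
  simp [axisRestriction_X, Pi.single_apply]

lemma axisRestriction_monomial_single (l : σ) (k : ℕ) (r : R) :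
    axisRestriction l (monomial (Finsupp.single l k) r) = Polynomial.monomial k r := by
  simp [axisRestriction, aeval_monomial, Polynomial.C_mul_X_pow_eq_monomial]

lemma axisRestriction_monomial_eq_zero {l j : σ} (hj : j ≠ l) {u : σ →₀ ℕ} (hu : u j ≠ 0) (r : R) :
    axisRestriction l (monomial u r) = 0 := by
  rw [axisRestriction, aeval_monomial, Finsupp.prod,
    Finset.prod_eq_zero (Finsupp.mem_support_iff.mpr hu) (by simp [hj, hu]), mul_zero]

theorem coeff_axisRestriction (l : σ) (p : MvPolynomial σ R) (m : ℕ) :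
    (axisRestriction l p).coeff m = coeff (Finsupp.single l m) p := by
  induction p using MvPolynomial.induction_on' with
  | add p q hp hq => simp only [map_add, Polynomial.coeff_add, MvPolynomial.coeff_add, hp, hq]
  | monomial u r =>
    by_cases off_axis : ∃ j ≠ l, u j ≠ 0
    · obtain ⟨j, hj, hu⟩ := off_axis
      have u_ne_single : u ≠ Finsupp.single l m := by
        rintro rfl
        exact hu (Finsupp.single_eq_of_ne hj)
      rw [axisRestriction_monomial_eq_zero hj hu, Polynomial.coeff_zero, coeff_monomial,
        if_neg u_ne_single]
    · obtain ⟨k, rfl⟩ : ∃ k, u = Finsupp.single l k := by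
        push Not at off_axis
        refine ⟨u l, Finsupp.ext fun j => ?_⟩
        rcases eq_or_ne j l with rfl | hj
        · rw [Finsupp.single_eq_same]
        · rw [off_axis j hj, Finsupp.single_eq_of_ne hj]
      simp only [axisRestriction_monomial_single, Polynomial.coeff_monomial, coeff_monomial,
        (Finsupp.single_injective l).eq_iff]

end AxisRestriction

lemma coeff_comp_C_mul_X_pow_mul {R : Type*} [CommSemiring R] (p : Polynomial R) (a : R) {e : ℕ}
    (he : 0 < e) (m : ℕ) :
    (p.comp (Polynomial.C a * Polynomial.X ^ e)).coeff (m * e) = p.coeff m * a ^ m := by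
  have comp_eq_expand : p.comp (Polynomial.C a * Polynomial.X ^ e) =
      Polynomial.expand R e (p.comp (Polynomial.C a * Polynomial.X)) := by
    simp [Polynomial.expand_eq_comp_X_pow, Polynomial.comp_assoc]
  rw [comp_eq_expand, Polynomial.coeff_expand_mul he, Polynomial.comp_C_mul_X_coeff]

section CharpolyRev

variable {ι R : Type*} [Fintype ι] [DecidableEq ι] [CommRing R] (M : Matrix ι ι R)

lemma charpolyRev_comp (p : Polynomial R) :
    M.charpolyRev.comp p = (1 - p • M.map Polynomial.C).det := by
  rw [charpolyRev, ← Polynomial.coe_compRingHom_apply, RingHom.map_det]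
  congr 1
  ext1 i j
  simp only [RingHom.mapMatrix_apply, Matrix.map_apply, Matrix.sub_apply, Matrix.smul_apply,
    Matrix.one_apply, smul_eq_mul, Polynomial.coe_compRingHom_apply, Polynomial.sub_comp,
    Polynomial.mul_comp, Polynomial.X_comp, Polynomial.C_comp, apply_ite (Polynomial.comp · p),
    Polynomial.one_comp, Polynomial.zero_comp]

lemma coeff_charpolyRev_card_sub {k : ℕ} (hk : k ≤ Fintype.card ι) :
    M.charpolyRev.coeff (Fintype.card ι - k) = M.charpoly.coeff k := by
  nontriviality R
  rw [← reverse_charpoly, Polynomial.coeff_reverse, charpoly_natDegree_eq_dim,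
    Polynomial.revAt_le (Nat.sub_le _ _), Nat.sub_sub_self hk]

end CharpolyRev

/-- The ideal generated by the coefficients of `p` at nonzero multi-degrees. -/
def nonconstCoeffIdeal {σ R : Type*} [CommSemiring R] (p : MvPolynomial σ R) : Ideal R :=
  Ideal.span {r : R | ∃ α : σ →₀ ℕ, α ≠ 0 ∧ coeff α p = r}

lemma coeff_mem_nonconstCoeffIdeal {σ R : Type*} [CommSemiring R] (p : MvPolynomial σ R)
    {α : σ →₀ ℕ} (hα : α ≠ 0) : coeff α p ∈ nonconstCoeffIdeal p :=
  Ideal.subset_span ⟨α, hα, rfl⟩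

/-- The Jacobian matrix of a polynomial map: the `(i, j)` entry is `∂f_i/∂x_j`. -/
def jacobianMatrix {ι σ R : Type*} [CommSemiring R] (f : ι → MvPolynomial σ R) :
    Matrix ι σ (MvPolynomial σ R) :=
  of fun i j => pderiv j (f i)

section PowerLinearMap

variable {ι R : Type*} [Fintype ι] [CommRing R] (A : Matrix ι ι R) (d : ℕ)

/-- The `i`-th component `x_i - (∑ j, A i j * x_j)^d` of the degree `d`-linear map with
coefficient matrix `A`. -/
def powerLinearMap (i : ι) : MvPolynomial ι R :=
  X i - (∑ j, C (A i j) * X j) ^ d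

/-- The Jacobian determinant of the degree `d`-linear map with coefficient matrix `A`. -/
def powerLinearJacobian [DecidableEq ι] : MvPolynomial ι R :=
  (jacobianMatrix (powerLinearMap A d)).det

/-- The matrix `B` of the theorem for an arbitrary coefficient matrix `A`: the `i`-th row of `A`
is scaled by the `(d - 1)`-st power of its `l`-th entry. -/
def rowScaledMatrix (l : ι) : Matrix ι ι R :=
  of fun i j => A i j * A i l ^ (d - 1)

variable [DecidableEq ι]

lemma pderiv_powerLinearMap (i j : ι) :
    pderiv j (powerLinearMap A d i) =
      (1 : Matrix ι ι (MvPolynomial ι R)) i j -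
        (d : MvPolynomial ι R) * (∑ k, C (A i k) * X k) ^ (d - 1) * C (A i j) := by
  have pderiv_linearForm : pderiv j (∑ k, C (A i k) * X k) = C (A i j) := by
    simp [Pi.single_apply]
  rw [powerLinearMap, map_sub, pderiv_pow, pderiv_linearForm, pderiv_X, Pi.single_apply,
    Matrix.one_apply]

lemma map_axisRestriction_jacobianMatrix_powerLinearMap (l : ι) :
    (jacobianMatrix (powerLinearMap A d)).map (axisRestriction l) =
      1 - (Polynomial.C (d : R) * Polynomial.X ^ (d - 1)) •
        (rowScaledMatrix A d l).map Polynomial.C := by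
  ext1 i j
  have map_one_apply : axisRestriction l ((1 : Matrix ι ι (MvPolynomial ι R)) i j) =
      (1 : Matrix ι ι (Polynomial R)) i j := by
    simp [Matrix.one_apply, apply_ite (axisRestriction l)]
  simp only [jacobianMatrix, rowScaledMatrix, Matrix.map_apply, of_apply,
    Matrix.sub_apply, Matrix.smul_apply, smul_eq_mul, pderiv_powerLinearMap, map_sub, map_mul,
    map_pow, map_natCast, map_one_apply, axisRestriction_linearForm, axisRestriction_C]
  ring

theorem axisRestriction_powerLinearJacobian (l : ι) :
    axisRestriction l (powerLinearJacobian A d) =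
      (rowScaledMatrix A d l).charpolyRev.comp
        (Polynomial.C (d : R) * Polynomial.X ^ (d - 1)) := by
  rw [powerLinearJacobian, AlgHom.map_det, AlgHom.mapMatrix_apply,
    map_axisRestriction_jacobianMatrix_powerLinearMap, charpolyRev_comp]

variable {d}

theorem coeff_single_powerLinearJacobian (hd : 2 ≤ d) (l : ι) (m : ℕ) :
    coeff (Finsupp.single l (m * (d - 1))) (powerLinearJacobian A d) =
      (rowScaledMatrix A d l).charpolyRev.coeff m * (d : R) ^ m := by
  rw [← coeff_axisRestriction, axisRestriction_powerLinearJacobian,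
    coeff_comp_C_mul_X_pow_mul _ _ (by lia)]

theorem stmt6_general {K : Type*} [Field K] [Algebra K R] (hd : 2 ≤ d) (hdK : (d : K) ≠ 0)
    (l : ι) {k : ℕ} (hk : k < Fintype.card ι) :
    (rowScaledMatrix A d l).charpoly.coeff k =
        ((d : K) ^ (Fintype.card ι - k))⁻¹ •
          coeff (Finsupp.single l ((Fintype.card ι - k) * (d - 1))) (powerLinearJacobian A d) ∧
      (rowScaledMatrix A d l).charpoly.coeff k ∈
        nonconstCoeffIdeal (powerLinearJacobian A d) := by
  set m := Fintype.card ι - k with hm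
  have coeff_jacobian : coeff (Finsupp.single l (m * (d - 1))) (powerLinearJacobian A d) =
      (d : K) ^ m • (rowScaledMatrix A d l).charpoly.coeff k := by
    rw [coeff_single_powerLinearJacobian A hd, hm, coeff_charpolyRev_card_sub _ hk.le,
      Algebra.smul_def, map_pow, map_natCast, mul_comm]
  have coeff_charpoly : (rowScaledMatrix A d l).charpoly.coeff k =
      ((d : K) ^ m)⁻¹ • coeff (Finsupp.single l (m * (d - 1))) (powerLinearJacobian A d) := by
    rw [coeff_jacobian, inv_smul_smul₀ (pow_ne_zero m hdK)]
  have degree_ne_zero : Finsupp.single l (m * (d - 1)) ≠ 0 :=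
    Finsupp.single_ne_zero.mpr (Nat.mul_ne_zero (by lia) (by lia))
  refine ⟨coeff_charpoly, ?_⟩
  rw [coeff_charpoly]
  exact Submodule.smul_of_tower_mem _ _ (coeff_mem_nonconstCoeffIdeal _ degree_ne_zero)

end PowerLinearMap

lemma jacPoly_eq_powerLinearJacobian (n d : ℕ) :
    jacPoly n d = powerLinearJacobian (mvPolynomialX (Fin n) (Fin n) ℚ) d :=
  rfl

lemma Jideal_eq_nonconstCoeffIdeal (n d : ℕ) :
    Jideal n d = nonconstCoeffIdeal (powerLinearJacobian (mvPolynomialX (Fin n) (Fin n) ℚ) d) :=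
  rfl

lemma Bmat_eq_rowScaledMatrix (n d : ℕ) (l : Fin n) :
    Bmat n d l = rowScaledMatrix (mvPolynomialX (Fin n) (Fin n) ℚ) d l :=
  rfl

/-- writing the characteristic polynomial `p_B(t) = det(tI - B) = ∑_k c_k t^k`
(with `c_n = 1`), for every `0 ≤ k ≤ n-1` one has `c_k = d^{-(n-k)} · J_{α(n-k,l)}`;
in particular `c_k ∈ J_{d,n}`. -/
theorem stmt6 (n d : ℕ) (hn : 1 ≤ n) (hd : 2 ≤ d) (l : Fin n) :
    ∀ k < n,
      (Bmat n d l).charpoly.coeff k =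
        ((d : ℚ) ^ (n - k))⁻¹ • coeff (Finsupp.single l ((n - k) * (d - 1))) (jacPoly n d) ∧
      (Bmat n d l).charpoly.coeff k ∈ Jideal n d := by
  intro k hk
  simpa only [Bmat_eq_rowScaledMatrix, jacPoly_eq_powerLinearJacobian,
    Jideal_eq_nonconstCoeffIdeal, Fintype.card_fin] using
    stmt6_general (K := ℚ) (mvPolynomialX (Fin n) (Fin n) ℚ) hd (by positivity) l
      (hk.trans_eq (Fintype.card_fin n).symm)
end
end

section
/- Let n = 3 and d = 3, and set w₁ = a_{1,2}² · Σ_{m=1}^{3} Σ_{p=1}^{3} a_{1,m} a_{m,3}² a_{m,p} a_{p,1}³ and w₂ = a_{1,3}² · Σ_{m=1}^{3} Σ_{p=1}^{3} a_{1,m} a_{m,2}² a_{m,p} a_{p,1}³ in R (these are z(fern_{3,3}, μ) for the root-leaf labelings μ = (1,(2,2),(3,3),(1,1,1)) and μ = (1,(3,3),(2,2),(1,1,1)) respectively). Then w₁ ∉ J_{3,3} and w₂ ∉ J_{3,3}, but w₁ + w₂ ∈ J_{3,3}. -/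
open MvPolynomial Matrix

noncomputable section

/-- `R` is the polynomial ring `ℚ[a_{i,j} : 1 ≤ i,j ≤ 3]`. -/
abbrev JacR3 : Type := MvPolynomial (Fin 3 × Fin 3) ℚ

/-- The `i`-th component of the degree `3`-linear map on 3 variables:
`f_i = x_i - (∑_j a_{i,j} x_j)³`. -/
def degLinMap33 (i : Fin 3) : MvPolynomial (Fin 3) JacR3 :=
  X i - (∑ j : Fin 3, C (X (i, j) : JacR3) * X j) ^ 3

/-- The Jacobian `Jac(f) = det(D(f))` with `(D(f))_{i,j} = ∂f_i/∂x_j`. -/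
def jacPoly33 : MvPolynomial (Fin 3) JacR3 :=
  (Matrix.of fun i j : Fin 3 => pderiv j (degLinMap33 i)).det

/-- The ideal `J_{3,3}` generated by the coefficients `J_α` of `Jac(f)` for all
nonzero multi-degrees `α`. -/
def Jideal33 : Ideal JacR3 :=
  Ideal.span {r : JacR3 | ∃ α : Fin 3 →₀ ℕ, α ≠ 0 ∧ coeff α jacPoly33 = r}

/-- `w₁ = a_{1,2}² ∑_{m,p} a_{1,m} a_{m,3}² a_{m,p} a_{p,1}³`, i.e.
`z(fern_{3,3}, (1,(2,2),(3,3),(1,1,1)))`.  (Indices `1,2,3` are `0,1,2 : Fin 3`.) -/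
def wOne : JacR3 :=
  (X (0, 1) : JacR3) ^ 2 *
    ∑ m : Fin 3, ∑ p : Fin 3, X (0, m) * X (m, 2) ^ 2 * X (m, p) * X (p, 0) ^ 3

/-- `w₂ = a_{1,3}² ∑_{m,p} a_{1,m} a_{m,2}² a_{m,p} a_{p,1}³`, i.e.
`z(fern_{3,3}, (1,(3,3),(2,2),(1,1,1)))`. -/
def wTwo : JacR3 :=
  (X (0, 2) : JacR3) ^ 2 *
    ∑ m : Fin 3, ∑ p : Fin 3, X (0, m) * X (m, 1) ^ 2 * X (m, p) * X (p, 0) ^ 3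

/-!
Write `N(u) = diag((A u)ᵢ²) A`, so that the Jacobian matrix of `u ↦ u - (A u)³` is `1 - 3 N(u)`.

Over `R / J_{3,3}` its determinant is `1` for every `u`. Scaling `u` separates the homogeneous
parts, so `tr N(u)`, `tr N(u)²` and `det N(u) = (∏ᵢ (A u)ᵢ)² det A` vanish. Polarizing the first
gives `Aᵀ diag(aᵢᵢ) A = 0`, hence `aᵢᵢ aᵢⱼ det A = 0`, and the diagonal of `A` may be dropped from
the third. With the cycle products `p = a₁₂ a₂₃ a₃₁` and `q = a₁₃ a₂₁ a₃₂`, the coefficient of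
`u₁² u₂² u₃²` then reads `(p² + 8 p q + q²) det A = 0`, while the trace relations give
`p q det A = 0` and `w₁ + w₂ = (p² - p q + q²) det A`. Therefore `w₁ + w₂ = 0` in `R / J_{3,3}`.

For the non-membership, specialize `A` to `T P` for `P` either of the two cyclic permutation
matrices. Both specializations send every generator `J_α` to the same multiple of `T⁹`, and they
agree modulo `T` on all of `R`, so on `J_{3,3}` they agree modulo `T¹⁰`. But they send `w₁` to
`T⁹` and `0`.
-/

section CubicJacobian

variable {n S : Type*} [Fintype n] [DecidableEq n] [CommRing S]

/-- A third of the Jacobian matrix at `u` of the map `u ↦ (A u)³`, the cube being entrywise; its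
entries are `(A u)ᵢ² aᵢⱼ`. -/
def cubeJacobian (A : Matrix n n S) (u : n → S) : Matrix n n S :=
  diagonal (fun i => (A *ᵥ u) i ^ 2) * A

theorem cubeJacobian_apply (A : Matrix n n S) (u : n → S) (i j : n) :
    cubeJacobian A u i j = (A *ᵥ u) i ^ 2 * A i j :=
  diagonal_mul ..

theorem cubeJacobian_smul (A : Matrix n n S) (c : S) (u : n → S) :
    cubeJacobian A (c • u) = c ^ 2 • cubeJacobian A u := by
  ext i j
  simp only [cubeJacobian_apply, mulVec_smul, Pi.smul_apply, Matrix.smul_apply, smul_eq_mul]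
  ring

theorem cubeJacobian_zero_right (A : Matrix n n S) : cubeJacobian A 0 = 0 := by
  ext i j
  simp [cubeJacobian_apply]

theorem det_cubeJacobian (A : Matrix n n S) (u : n → S) :
    (cubeJacobian A u).det = (∏ i, (A *ᵥ u) i) ^ 2 * A.det := by
  rw [cubeJacobian, det_mul, det_diagonal, Finset.prod_pow]

theorem det_one_sub_smul_fin_three (c : S) (M : Matrix (Fin 3) (Fin 3) S) :
    2 * (1 - c • M).det =
      2 - 2 * c * M.trace + c ^ 2 * (M.trace ^ 2 - (M * M).trace) - 2 * c ^ 3 * M.det := by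
  simp only [det_fin_three, trace_fin_three, mul_apply, Fin.sum_univ_three,
    Matrix.sub_apply, Matrix.smul_apply, smul_eq_mul, one_apply, Fin.reduceEq, if_true, if_false]
  ring

end CubicJacobian

theorem pderiv_degLinMap33 (i j : Fin 3) :
    pderiv j (degLinMap33 i) =
      (1 - (3 : MvPolynomial (Fin 3) JacR3) •
        cubeJacobian ((mvPolynomialX (Fin 3) (Fin 3) ℚ).map C) X) i j := by
  have linear_form : pderiv j (∑ k : Fin 3, C (X (i, k) : JacR3) * X k) = C (X (i, j)) := by
    simp [pderiv_X, Pi.single_apply]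
  simp only [degLinMap33, map_sub, Derivation.leibniz_pow, linear_form, pderiv_X,
    Matrix.sub_apply, one_apply, Matrix.smul_apply, cubeJacobian_apply, mulVec, dotProduct,
    map_apply, mvPolynomialX_apply, Pi.single_apply, eq_comm (a := i), smul_eq_mul, nsmul_eq_mul]
  norm_num

section Specialization

variable {S : Type*} [CommRing S]

theorem eval₂_jacPoly33 (ψ : JacR3 →+* S) (u : Fin 3 → S) :
    eval₂ ψ u jacPoly33 =
      (1 - (3 : S) • cubeJacobian ((mvPolynomialX (Fin 3) (Fin 3) ℚ).map ψ) u).det := by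
  rw [← coe_eval₂Hom, jacPoly33, RingHom.map_det]
  congr 1
  ext i j
  simp [pderiv_degLinMap33, cubeJacobian_apply, mulVec, dotProduct, one_apply, apply_ite]

theorem coeff_zero_jacPoly33 : coeff 0 jacPoly33 = 1 := by
  have h := eval₂_jacPoly33 (RingHom.id JacR3) 0
  rwa [cubeJacobian_zero_right, smul_zero, sub_zero, det_one, eval₂_id, eval_zero] at h

theorem map_jacPoly33_eq_one {ψ : JacR3 →+* S} (hψ : Jideal33 ≤ RingHom.ker ψ) :
    MvPolynomial.map ψ jacPoly33 = 1 := by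
  ext α
  rw [coeff_map, coeff_one]
  split_ifs with hα
  · rw [← hα, coeff_zero_jacPoly33, map_one]
  · exact hψ (Ideal.subset_span ⟨α, Ne.symm hα, rfl⟩)

end Specialization

section UnitJacobian

variable {S : Type*} [CommRing S]

/-- The map `u ↦ u - (A u)³` (entrywise cube) has Jacobian determinant `1` at every point. The
matrices over an algebra `S` over `ℚ` with this property are those at which `J_{3,3}` vanishes. -/
def HasUnitCubicJacobian (A : Matrix (Fin 3) (Fin 3) S) : Prop :=
  ∀ u : Fin 3 → S, (1 - (3 : S) • cubeJacobian A u).det = 1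

variable [IsAddTorsionFree S]

theorem trace_and_det_eq_zero_of_det_one_sub_sq_smul_eq_one {M : Matrix (Fin 3) (Fin 3) S}
    (hM : ∀ t : S, (1 - t ^ 2 • M).det = 1) :
    M.trace = 0 ∧ (M * M).trace = 0 ∧ M.det = 0 := by
  have expansion (t : S) :
      -2 * t ^ 2 * M.trace + t ^ 4 * (M.trace ^ 2 - (M * M).trace) - 2 * t ^ 6 * M.det = 0 := by
    linear_combination 2 * hM t - det_one_sub_smul_fin_three (t ^ 2) M
  have trace_zero : M.trace = 0 := by
    apply (nsmul_eq_zero_iff_right (n := 360) (by norm_num)).1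
    linear_combination -270 * expansion 1 + 27 * expansion 2 - 2 * expansion 3
  have det_zero : M.det = 0 := by
    apply (nsmul_eq_zero_iff_right (n := 720) (by norm_num)).1
    linear_combination -15 * expansion 1 + 6 * expansion 2 - expansion 3
  refine ⟨trace_zero, ?_, det_zero⟩
  linear_combination -expansion 1 + (M.trace - 2) * trace_zero - 2 * det_zero

variable {A : Matrix (Fin 3) (Fin 3) S}

theorem HasUnitCubicJacobian.trace_and_det_eq_zero (hA : HasUnitCubicJacobian A)
    (u : Fin 3 → S) :
    (cubeJacobian A u).trace = 0 ∧ (cubeJacobian A u * cubeJacobian A u).trace = 0 ∧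
      (cubeJacobian A u).det = 0 := by
  obtain ⟨trace_zero, trace_sq_zero, det_zero⟩ :=
    trace_and_det_eq_zero_of_det_one_sub_sq_smul_eq_one
      (M := (3 : S) • cubeJacobian A u) fun t => by
        rw [smul_comm, ← cubeJacobian_smul, hA]
  simp only [smul_mul_smul_comm, trace_smul, det_smul, Fintype.card_fin, smul_eq_mul]
    at trace_zero trace_sq_zero det_zero
  refine ⟨(nsmul_eq_zero_iff_right (n := 3) (by norm_num)).1 ?_,
    (nsmul_eq_zero_iff_right (n := 9) (by norm_num)).1 ?_,
    (nsmul_eq_zero_iff_right (n := 27) (by norm_num)).1 ?_⟩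
  · linear_combination trace_zero
  · linear_combination trace_sq_zero
  · linear_combination det_zero

theorem HasUnitCubicJacobian.sum_diag_mul_sq_eq_zero (hA : HasUnitCubicJacobian A)
    (u : Fin 3 → S) : ∑ i, A i i * (A *ᵥ u) i ^ 2 = 0 := by
  rw [← (hA.trace_and_det_eq_zero u).1]
  simp only [trace, diag_apply, cubeJacobian_apply, mul_comm]

theorem HasUnitCubicJacobian.sum_mul_sq_mul_sq_eq_zero (hA : HasUnitCubicJacobian A)
    (u : Fin 3 → S) :
    ∑ i, ∑ j, A i j * A j i * ((A *ᵥ u) i ^ 2 * (A *ᵥ u) j ^ 2) = 0 := by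
  rw [← (hA.trace_and_det_eq_zero u).2.1]
  simp only [trace, diag_apply, mul_apply, cubeJacobian_apply]
  exact Finset.sum_congr rfl fun i _ => Finset.sum_congr rfl fun j _ => by ring

theorem HasUnitCubicJacobian.sq_prod_mul_det_eq_zero (hA : HasUnitCubicJacobian A)
    (u : Fin 3 → S) : (∏ i, (A *ᵥ u) i) ^ 2 * A.det = 0 :=
  det_cubeJacobian A u ▸ (hA.trace_and_det_eq_zero u).2.2

theorem HasUnitCubicJacobian.sum_diag_mul_mul_eq_zero (hA : HasUnitCubicJacobian A)
    (j k : Fin 3) : ∑ i, A i i * A i j * A i k = 0 := by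
  have quadratic (u) := hA.sum_diag_mul_sq_eq_zero u
  have sum_add := quadratic (Pi.single j 1 + Pi.single k 1)
  have sum_left := quadratic (Pi.single j 1)
  have sum_right := quadratic (Pi.single k 1)
  simp only [mulVec_add, mulVec_single_one, Pi.add_apply, col_apply, Fin.sum_univ_three]
    at sum_add sum_left sum_right ⊢
  apply (nsmul_eq_zero_iff_right two_ne_zero).1
  linear_combination sum_add - sum_left - sum_right

theorem HasUnitCubicJacobian.sum_polarized_eq_zero (hA : HasUnitCubicJacobian A)
    (x y z w : Fin 3) :
    ∑ i, ∑ j, A i j * A j i * (A i x * A i y * (A j z * A j w) +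
      A i x * A i z * (A j y * A j w) + A i x * A i w * (A j y * A j z)) = 0 := by
  have quartic (β γ δ : S) :=
    hA.sum_mul_sq_mul_sq_eq_zero
      (Pi.single x 1 + β • Pi.single y 1 + γ • Pi.single z 1 + δ • Pi.single w 1)
  simp only [mulVec_add, mulVec_smul, mulVec_single_one, Pi.add_apply, Pi.smul_apply, col_apply,
    smul_eq_mul, Fin.sum_univ_three] at quartic ⊢
  -- The alternating sum over signs isolates the part that is linear in each of the four columns.
  apply (nsmul_eq_zero_iff_right (n := 64) (by norm_num)).1
  linear_combination quartic 1 1 1 - quartic 1 1 (-1) - quartic 1 (-1) 1 - quartic (-1) 1 1 +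
    quartic 1 (-1) (-1) + quartic (-1) 1 (-1) + quartic (-1) (-1) 1 - quartic (-1) (-1) (-1)

theorem HasUnitCubicJacobian.diag_mul_mul_det_eq_zero (hA : HasUnitCubicJacobian A)
    (i j : Fin 3) : A i i * A i j * A.det = 0 := by
  have gram_zero : Aᵀ * (diagonal A.diag * A) = 0 := by
    ext j k
    rw [mul_apply, Matrix.zero_apply, ← hA.sum_diag_mul_mul_eq_zero j k]
    refine Finset.sum_congr rfl fun i _ => ?_
    rw [transpose_apply, diagonal_mul, diag_apply]
    ring
  have det_smul_zero : A.det • (diagonal A.diag * A) = 0 := by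
    rw [← det_transpose, ← one_mul (diagonal A.diag * A), ← smul_mul_assoc, ← adjugate_mul,
      Matrix.mul_assoc, gram_zero, Matrix.mul_zero]
  simpa only [Matrix.smul_apply, diagonal_mul, diag_apply, smul_eq_mul, mul_comm,
    Matrix.zero_apply] using congr_fun₂ det_smul_zero i j

theorem HasUnitCubicJacobian.sq_mulVec_mul_det_eq (hA : HasUnitCubicJacobian A)
    (u : Fin 3 → S) (i : Fin 3) :
    (A *ᵥ u) i ^ 2 * A.det = ((A - diagonal A.diag) *ᵥ u) i ^ 2 * A.det := by
  have diag_mul_mulVec : A i i * (A *ᵥ u) i * A.det = 0 := by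
    rw [mulVec, dotProduct, Finset.mul_sum, Finset.sum_mul]
    refine Finset.sum_eq_zero fun j _ => ?_
    linear_combination u j * hA.diag_mul_mul_det_eq_zero i j
  rw [sub_mulVec, Pi.sub_apply, mulVec_diagonal, diag_apply]
  linear_combination 2 * u i * diag_mul_mulVec - u i ^ 2 * hA.diag_mul_mul_det_eq_zero i i

theorem HasUnitCubicJacobian.sq_prod_offDiag_mul_det_eq_zero (hA : HasUnitCubicJacobian A)
    (x y z : S) :
    ((A 0 1 * y + A 0 2 * z) * (A 1 0 * x + A 1 2 * z) * (A 2 0 * x + A 2 1 * y)) ^ 2 *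
      A.det = 0 := by
  have hprod := hA.sq_prod_mul_det_eq_zero ![x, y, z]
  have hrow (i) := hA.sq_mulVec_mul_det_eq ![x, y, z] i
  have offDiag_mulVec : (A - diagonal A.diag) *ᵥ ![x, y, z] =
      ![A 0 1 * y + A 0 2 * z, A 1 0 * x + A 1 2 * z, A 2 0 * x + A 2 1 * y] := by
    ext i
    fin_cases i <;> simp [mulVec, dotProduct, Fin.sum_univ_three]
  rw [offDiag_mulVec] at hrow
  set l := A *ᵥ ![x, y, z]
  have hrow₀ : l 0 ^ 2 * A.det = (A 0 1 * y + A 0 2 * z) ^ 2 * A.det := hrow 0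
  have hrow₁ : l 1 ^ 2 * A.det = (A 1 0 * x + A 1 2 * z) ^ 2 * A.det := hrow 1
  have hrow₂ : l 2 ^ 2 * A.det = (A 2 0 * x + A 2 1 * y) ^ 2 * A.det := hrow 2
  rw [Fin.prod_univ_three] at hprod
  linear_combination hprod - (l 1 * l 2) ^ 2 * hrow₀ -
    (A 0 1 * y + A 0 2 * z) ^ 2 * (l 2 ^ 2 * hrow₁ + (A 1 0 * x + A 1 2 * z) ^ 2 * hrow₂)

theorem HasUnitCubicJacobian.cycle_quadratic_mul_det_eq_zero (hA : HasUnitCubicJacobian A) :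
    ((A 0 1 * A 1 2 * A 2 0) ^ 2 +
      8 * (A 0 1 * A 1 2 * A 2 0) * (A 0 2 * A 1 0 * A 2 1) +
      (A 0 2 * A 1 0 * A 2 1) ^ 2) * A.det = 0 := by
  have vanishes := hA.sq_prod_offDiag_mul_det_eq_zero
  -- The combination below is four times the coefficient of `x² y² z²` in `vanishes x y z`.
  apply (nsmul_eq_zero_iff_right (n := 4) (by norm_num)).1
  linear_combination
    vanishes 1 1 1 + vanishes 1 1 (-1) + vanishes 1 (-1) 1 + vanishes (-1) 1 1 -
    2 * (vanishes 1 1 0 + vanishes 1 (-1) 0 + vanishes 1 0 1 + vanishes 1 0 (-1) +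
      vanishes 0 1 1 + vanishes 0 1 (-1))

theorem HasUnitCubicJacobian.mul_cycles_mul_det_eq_zero (hA : HasUnitCubicJacobian A) :
    A 0 1 * A 1 2 * A 2 0 * (A 0 2 * A 1 0 * A 2 1) * A.det = 0 := by
  have hT := hA.sum_diag_mul_mul_eq_zero
  have hQ := hA.sum_polarized_eq_zero
  simp only [Fin.sum_univ_three] at hT hQ
  have t₀₀ := hT 0 0
  have t₀₁ := hT 0 1
  have t₀₂ := hT 0 2
  have t₁₁ := hT 1 1
  have t₁₂ := hT 1 2
  have t₂₂ := hT 2 2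
  have q₀₀₀₁ := hQ 0 0 0 1
  have q₀₀₀₂ := hQ 0 0 0 2
  have q₀₀₁₁ := hQ 0 0 1 1
  have q₀₀₂₂ := hQ 0 0 2 2
  have q₀₁₁₂ := hQ 0 1 1 2
  have q₀₁₂₂ := hQ 0 1 2 2
  apply (nsmul_eq_zero_iff_right three_ne_zero).1
  rw [det_fin_three]
  clear hA hT hQ
  generalize A 0 0 = a, A 0 1 = b, A 0 2 = c, A 1 0 = d, A 1 1 = e, A 1 2 = f, A 2 0 = g,
    A 2 1 = h, A 2 2 = i at *
  -- The cofactors solve a linear system over the monomials of the weight of the left-hand side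
  -- under the diagonal changes of coordinates, which preserve the unit Jacobian property.
  linear_combination
    b * c ^ 2 * q₀₀₀₁ + b ^ 2 * c * q₀₀₀₂ +
    3 * (a ^ 2 * c * q₀₁₁₂ + a ^ 2 * b * q₀₁₂₂ - a * b ^ 2 * q₀₀₂₂ - a * c ^ 2 * q₀₀₁₁) +
    3 * (b^2*c*d*e*f - b*c^2*d*e^2) * t₀₀ +
    3 * (a*b*c*d*e*f + 2*a*b^2*d*f^2 + 3*a*c^2*d*e^2 + b*c^2*g^2*i + e^2*f*g*i^2 -
      a*c^2*g*h*i - 2*b^2*c*d^2*f - f^3*g*h^2) * t₀₁ +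
    3 * (3*a*b^2*g*i^2 + 2*a*c^2*g*h^2 + d*e^2*h*i^2 - a*b*c*d*e^2 - a*b^2*d*e*f -
      2*a^3*b^2*c - 2*b*c^2*g^2*h - b^2*c*g^2*i - d*f^2*h^3) * t₀₂ +
    3 * (2*d*f^2*g*h*i + f^3*g^2*h - 2*a^2*b*d*f^2 - 2*a^2*c*d*e*f - 2*d*e*f*g*i^2 -
      d^2*f*h*i^2) * t₁₁ +
    3 * (2*a*b^2*d^2*f + 2*a*c^2*g^2*h + d*e^2*g*i^2 - a^2*b*d*e*f - a^2*b*g*i^2 -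
      a^2*c*d*e^2 - a^2*c*g*h*i - d*f^2*g*h^2) * t₁₂ +
    3 * (2*d*e*f*g*h^2 + d^2*f*h^3 - 2*a^2*b*g*h*i - 2*a^2*c*g*h^2 - 2*d*e^2*g*h*i -
      e^2*f*g^2*h) * t₂₂

theorem HasUnitCubicJacobian.fern_add_fern_eq (hA : HasUnitCubicJacobian A) :
    A 0 1 ^ 2 * ∑ m, ∑ p, A 0 m * A m 2 ^ 2 * A m p * A p 0 ^ 3 +
      A 0 2 ^ 2 * ∑ m, ∑ p, A 0 m * A m 1 ^ 2 * A m p * A p 0 ^ 3 =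
    ((A 0 1 * A 1 2 * A 2 0) ^ 2 - A 0 1 * A 1 2 * A 2 0 * (A 0 2 * A 1 0 * A 2 1) +
      (A 0 2 * A 1 0 * A 2 1) ^ 2) * A.det := by
  have hT := hA.sum_diag_mul_mul_eq_zero
  have q₁₁₂₂ := hA.sum_polarized_eq_zero 1 1 2 2
  rw [det_fin_three]
  simp only [Fin.sum_univ_three] at hT q₁₁₂₂ ⊢
  have t₀₀ := hT 0 0
  have t₀₁ := hT 0 1
  have t₀₂ := hT 0 2
  have t₁₁ := hT 1 1
  have t₁₂ := hT 1 2
  have t₂₂ := hT 2 2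
  clear hA hT
  generalize A 0 0 = a, A 0 1 = b, A 0 2 = c, A 1 0 = d, A 1 1 = e, A 1 2 = f, A 2 0 = g,
    A 2 1 = h, A 2 2 = i at *
  linear_combination
    a ^ 3 * q₁₁₂₂ +
    (b^3*d*f^2 + c^3*g*h^2 + e^2*f*h*i^2 - a*b^2*e*f^2 - a*c^2*h^2*i - f^3*h^3) * t₀₀ +
    (4*a^2*b*e*f^2 + d*f^2*h^2*i - a^2*c*h*i^2 - a^3*b*c^2 - b^2*c*d^2*f -
      e*f^2*g*h*i) * t₀₁ +
    (3*a^2*b*h*i^2 + 2*a^2*c*h^2*i + e*f^2*g*h^2 - b*c^2*g^2*h - d*e*f*h^2*i) * t₀₂ +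
    (b*c^2*d^3 + f^3*g^2*h - a^2*b*d*f^2 - a^2*c*d*e*f - 3*a^3*e*f^2 - d^2*f*h*i^2) * t₁₁ +
    (a*b^2*d^2*f + a*c^2*g^2*h + a^2*c*d*e^2 + b*c^2*g^3 + b^2*c*d^3 + d*e*f*g*h*i -
      3*a^2*b*d*e*f - 2*a^3*h*i^2 - d*f^2*g*h^2) * t₁₂ +
    (b^2*c*g^3 + d^2*f*h^3 - 3*a^2*b*g*h*i - a^2*c*g*h^2 - a^3*h^2*i - e^2*f*g^2*h) * t₂₂

theorem HasUnitCubicJacobian.fern_add_fern_eq_zero (hA : HasUnitCubicJacobian A) :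
    A 0 1 ^ 2 * ∑ m, ∑ p, A 0 m * A m 2 ^ 2 * A m p * A p 0 ^ 3 +
      A 0 2 ^ 2 * ∑ m, ∑ p, A 0 m * A m 1 ^ 2 * A m p * A p 0 ^ 3 = 0 := by
  linear_combination hA.fern_add_fern_eq + hA.cycle_quadratic_mul_det_eq_zero -
    9 * hA.mul_cycles_mul_det_eq_zero

end UnitJacobian

theorem hasUnitCubicJacobian_map_of_le_ker {S : Type*} [CommRing S] {ψ : JacR3 →+* S}
    (hψ : Jideal33 ≤ RingHom.ker ψ) :
    HasUnitCubicJacobian ((mvPolynomialX (Fin 3) (Fin 3) ℚ).map ψ) := fun u => by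
  rw [← eval₂_jacPoly33, ← eval_map, map_jacPoly33_eq_one hψ, map_one]

theorem wOne_add_wTwo_mem_Jideal33 : wOne + wTwo ∈ Jideal33 := by
  have : IsAddTorsionFree (JacR3 ⧸ Jideal33) := .of_module_rat _
  have hA := hasUnitCubicJacobian_map_of_le_ker (Ideal.mk_ker (I := Jideal33)).ge
  rw [← Ideal.Quotient.eq_zero_iff_mem]
  simpa only [wOne, wTwo, map_add, map_mul, map_pow, map_sum, Matrix.map_apply,
    mvPolynomialX_apply] using hA.fern_add_fern_eq_zero

section CyclicSpecialization

/-- The specialization of the generic `3 × 3` matrix to `T • P`, with `P` the permutation matrix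
of the shift `i ↦ i + k`. -/
def cyclicSpecialization (k : Fin 3) : JacR3 →ₐ[ℚ] Polynomial ℚ :=
  aeval fun p => if p.2 = p.1 + k then Polynomial.X else 0

theorem X_dvd_cyclicSpecialization_sub (k l : Fin 3) (r : JacR3) :
    Polynomial.X ∣ cyclicSpecialization k r - cyclicSpecialization l r := by
  suffices constantCoeff_comp : ∀ k, Polynomial.constantCoeff.comp
      (cyclicSpecialization k : JacR3 →+* Polynomial ℚ) = constantCoeff by
    rw [Polynomial.X_dvd_iff, Polynomial.coeff_sub, sub_eq_zero]
    exact (RingHom.congr_fun (constantCoeff_comp k) r).trans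
      (RingHom.congr_fun (constantCoeff_comp l) r).symm
  intro k
  ext p <;> simp [cyclicSpecialization, apply_ite]

theorem cubeJacobian_cyclicSpecialization_apply (k i j : Fin 3) :
    cubeJacobian ((mvPolynomialX (Fin 3) (Fin 3) ℚ).map
        (C.comp (cyclicSpecialization k : JacR3 →+* Polynomial ℚ))) X i j =
      if j = i + k then C (Polynomial.X ^ 3) * X (i + k) ^ 2 else 0 := by
  simp only [cubeJacobian_apply, mulVec, dotProduct, map_apply, mvPolynomialX_apply,
    RingHom.comp_apply, RingHom.coe_coe, cyclicSpecialization, aeval_X, apply_ite C, C_0, ite_mul,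
    zero_mul, Finset.sum_ite_eq', Finset.mem_univ, if_true, mul_ite, mul_zero, C_pow]
  split_ifs <;> ring

theorem map_cyclicSpecialization_jacPoly33 {k : Fin 3} (hk : k ≠ 0) :
    MvPolynomial.map (cyclicSpecialization k : JacR3 →+* Polynomial ℚ) jacPoly33 =
      1 - C (27 * Polynomial.X ^ 9) * (X 0 * X 1 * X 2) ^ 2 := by
  rw [← eval₂_eta (MvPolynomial.map _ _), eval₂_map, eval₂_jacPoly33]
  have C_ofNat : (C 27 : MvPolynomial (Fin 3) (Polynomial ℚ)) = 27 := map_ofNat C 27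
  simp only [det_fin_three, Matrix.sub_apply, Matrix.smul_apply, smul_eq_mul,
    cubeJacobian_cyclicSpecialization_apply, one_apply, C_mul, C_pow, C_ofNat]
  fin_cases k
  · contradiction
  all_goals
    simp only [Fin.mk_one, Fin.reduceFinMk, Fin.reduceAdd, Fin.reduceEq, zero_add, if_true,
      if_false]
    ring

theorem cyclicSpecialization_coeff_jacPoly33 {k : Fin 3} (hk : k ≠ 0) {α : Fin 3 →₀ ℕ}
    (hα : α ≠ 0) :
    cyclicSpecialization k (coeff α jacPoly33) =
      -(27 * Polynomial.X ^ 9 * coeff α ((X 0 * X 1 * X 2) ^ 2)) := by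
  rw [← AlgHom.coe_toRingHom, ← coeff_map, map_cyclicSpecialization_jacPoly33 hk, coeff_sub,
    coeff_one, if_neg hα.symm, coeff_C_mul, zero_sub]

theorem cyclicSpecialization_dvd_of_mem_Jideal33 {r : JacR3} (hr : r ∈ Jideal33) :
    Polynomial.X ^ 9 ∣ cyclicSpecialization 2 r ∧
      Polynomial.X ^ 10 ∣ cyclicSpecialization 1 r - cyclicSpecialization 2 r := by
  induction hr using Submodule.span_induction with
  | zero => simp
  | mem r hr =>
    obtain ⟨α, hα, rfl⟩ := hr
    rw [cyclicSpecialization_coeff_jacPoly33 (k := 1) (by decide) hα,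
      cyclicSpecialization_coeff_jacPoly33 (k := 2) (by decide) hα, sub_self]
    exact ⟨((Dvd.intro_left _ rfl).mul_right _).neg_right, dvd_zero _⟩
  | add r s _ _ hr hs =>
    simp only [map_add, add_sub_add_comm]
    exact ⟨dvd_add hr.1 hs.1, dvd_add hr.2 hs.2⟩
  | smul s r _ hr =>
    simp only [smul_eq_mul, map_mul]
    refine ⟨hr.1.mul_left _, ?_⟩
    have product_rule : cyclicSpecialization 1 s * cyclicSpecialization 1 r -
          cyclicSpecialization 2 s * cyclicSpecialization 2 r =
        cyclicSpecialization 1 s * (cyclicSpecialization 1 r - cyclicSpecialization 2 r) +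
          cyclicSpecialization 2 r * (cyclicSpecialization 1 s - cyclicSpecialization 2 s) := by
      ring
    rw [product_rule]
    exact dvd_add (hr.2.mul_left _) (mul_dvd_mul hr.1 (X_dvd_cyclicSpecialization_sub 1 2 s))

theorem cyclicSpecialization_one_wOne : cyclicSpecialization 1 wOne = Polynomial.X ^ 9 := by
  simp [cyclicSpecialization, wOne, Fin.sum_univ_three, mul_assoc, ← pow_succ',
    ← pow_add]

theorem cyclicSpecialization_two_wOne : cyclicSpecialization 2 wOne = 0 := by
  simp [cyclicSpecialization, wOne]

theorem wOne_notMem_Jideal33 : wOne ∉ Jideal33 := by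
  intro hmem
  have hdvd := (cyclicSpecialization_dvd_of_mem_Jideal33 hmem).2
  rw [cyclicSpecialization_one_wOne, cyclicSpecialization_two_wOne, sub_zero] at hdvd
  simpa using (pow_dvd_pow_iff Polynomial.X_ne_zero Polynomial.not_isUnit_X).1 hdvd

end CyclicSpecialization

/-- `w₁ ∉ J_{3,3}` and `w₂ ∉ J_{3,3}`, but `w₁ + w₂ ∈ J_{3,3}`. -/
theorem stmt15 : wOne ∉ Jideal33 ∧ wTwo ∉ Jideal33 ∧ wOne + wTwo ∈ Jideal33 := by
  refine ⟨wOne_notMem_Jideal33, fun wTwo_mem => ?_, wOne_add_wTwo_mem_Jideal33⟩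
  exact wOne_notMem_Jideal33
    ((Ideal.add_mem_iff_left Jideal33 wTwo_mem).1 wOne_add_wTwo_mem_Jideal33)
end
end

section
/- Let n = 3 and d = 2, and set z₁ = a_{1,2} · Σ_{m=1}^{3} Σ_{p=1}^{3} a_{1,m} a_{m,3} a_{m,p} a_{p,1}² ∈ R (this is z(fern_{2,3}, μ) for the root-leaf labeling μ = (1,(2),(3),(1,1))). Let I_{nil-2} be the ideal of R generated by the nine entries (A²)_{i,j}, 1 ≤ i, j ≤ 3, of the square of the matrix A = (a_{i,j}). Then z₁ lies in the ideal J_{2,3} + I_{nil-2}. -/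
open MvPolynomial Matrix

noncomputable section

/-- The `i`-th component of the degree `2`-linear map on 3 variables:
`f_i = x_i - (∑_j a_{i,j} x_j)²`. -/
def degLinMap23 (i : Fin 3) : MvPolynomial (Fin 3) JacR3 :=
  X i - (∑ j : Fin 3, C (X (i, j) : JacR3) * X j) ^ 2

/-- The Jacobian `Jac(f) = det(D(f))` with `(D(f))_{i,j} = ∂f_i/∂x_j`. -/
def jacPoly23 : MvPolynomial (Fin 3) JacR3 :=
  (Matrix.of fun i j : Fin 3 => pderiv j (degLinMap23 i)).det

/-- The ideal `J_{2,3}` generated by the coefficients `J_α` of `Jac(f)` for all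
nonzero multi-degrees `α`. -/
def Jideal23 : Ideal JacR3 :=
  Ideal.span {r : JacR3 | ∃ α : Fin 3 →₀ ℕ, α ≠ 0 ∧ coeff α jacPoly23 = r}

/-- `z₁ = a_{1,2} ∑_{m,p} a_{1,m} a_{m,3} a_{m,p} a_{p,1}²`, i.e.
`z(fern_{2,3}, (1,(2),(3),(1,1)))`.  (Indices `1,2,3` are `0,1,2 : Fin 3`.) -/
def zOne : JacR3 :=
  (X (0, 1) : JacR3) *
    ∑ m : Fin 3, ∑ p : Fin 3, X (0, m) * X (m, 2) * X (m, p) * X (p, 0) ^ 2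

/-- The matrix `A` with entries the indeterminates `a_{i,j}`. -/
def Amat3 : Matrix (Fin 3) (Fin 3) JacR3 := fun i j => X (i, j)

/-- `I_{nil-2}`, the ideal generated by the nine entries of `A²`. -/
def InilTwo : Ideal JacR3 :=
  Ideal.span {r : JacR3 | ∃ i j : Fin 3, (Amat3 ^ 2) i j = r}

/-!
Modulo `J_{2,3} + I_{nil-2}` the matrix `A` satisfies `A² = 0`, and the linear coefficients of the
Jacobian give `∑ₖ aₖₖ (A x)ₖ = 0` for every vector `x`. Let `T = tr A` and let `{i, j, l}` be the
three indices. The off-diagonal cofactor is `(adj A)ᵢⱼ = aᵢₗ aₗⱼ - aᵢⱼ aₗₗ`, and Cayley–Hamilton in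
the form `adj A = A² - T A + tr(adj A)` makes it `-T aᵢⱼ`; together with the linear relation this
gives `(A diag(A x) A)ᵢⱼ = -T aᵢⱼ (A x)ₗ`.

The sum in `z₁` is of this form with `x` the entrywise square of the `i`-th column of `A`, and then
`(A x)ₗ = (A diag(A eᵢ) A)ₗᵢ` is again of this form. Hence the sum equals `T² aᵢⱼ aₗᵢ aⱼᵢ`. It
vanishes because `T² = 2 tr(adj A)` and `tr(adj A) A = (adj A) A` is the scalar matrix `det A`.
-/

section LinearCoefficients

open DualNumber TrivSqZeroExt

variable {σ R : Type*}

theorem fst_aeval_single_eps [DecidableEq σ] [CommSemiring R] (j : σ) (p : MvPolynomial σ R) :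
    (aeval (Pi.single j (ε : R[ε])) p).fst = constantCoeff p := by
  induction p using MvPolynomial.induction_on with
  | C r => simp [algebraMap_eq_inl]
  | add p q hp hq => simp [hp, hq]
  | mul_X p i _ => obtain rfl | hij := eq_or_ne i j <;> simp [*]

theorem snd_aeval_single_eps [DecidableEq σ] [CommSemiring R] (j : σ) (p : MvPolynomial σ R) :
    (aeval (Pi.single j (ε : R[ε])) p).snd = coeff (Finsupp.single j 1) p := by
  induction p using MvPolynomial.induction_on with
  | C r => simp [algebraMap_eq_inl, coeff_C, eq_comm]
  | add p q hp hq => simp [hp, hq]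
  | mul_X p i _ =>
    obtain rfl | hij := eq_or_ne i j
    · simp [coeff_mul_X', fst_aeval_single_eps, constantCoeff_eq]
    · simp [coeff_mul_X', hij]

theorem aeval_single_eps [DecidableEq σ] [CommSemiring R] (j : σ) (p : MvPolynomial σ R) :
    aeval (Pi.single j (ε : R[ε])) p =
      inl (constantCoeff p) + ε * inl (coeff (Finsupp.single j 1) p) := by
  ext <;> simp [fst_aeval_single_eps, snd_aeval_single_eps]

-- Send `x_j` to `ε`, the other variables to `0`, and use `det (1 + ε N) = 1 + ε tr N`.
theorem coeff_single_one_det {n : Type*} [Fintype n] [DecidableEq n] [CommRing R]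
    {M : Matrix n n (MvPolynomial σ R)} (hM : M.map constantCoeff = 1) (j : σ) :
    coeff (Finsupp.single j 1) M.det = ∑ i, coeff (Finsupp.single j 1) (M i i) := by
  classical
  let N : Matrix n n R := M.map (coeff (Finsupp.single j 1))
  have hMN : (aeval (Pi.single j (ε : R[ε]))).mapMatrix M = 1 + (ε : R[ε]) • N.map inl := by
    ext1 i k
    have hik : constantCoeff (M i k) = (1 : Matrix n n R) i k := congr_fun₂ hM i k
    simp [aeval_single_eps, hik, N, Matrix.one_apply, apply_ite]
  rw [← snd_aeval_single_eps, AlgHom.map_det, hMN, det_one_add_smul, eps_pow_two]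
  simp [N, Matrix.trace, fst_sum]

end LinearCoefficients

theorem mul_diagonal_mul_apply {m n o S : Type*} [Fintype n] [DecidableEq n]
    [NonUnitalNonAssocSemiring S] (A : Matrix m n S) (y : n → S) (B : Matrix n o S)
    (i : m) (j : o) : (A * diagonal y * B) i j = ∑ k, A i k * y k * B k j := by
  rw [mul_apply]
  simp only [mul_diagonal]

section FinThree

variable {S : Type*} [CommRing S] (A : Matrix (Fin 3) (Fin 3) S) {i j l : Fin 3}

theorem sum_fin_three_of_ne {M : Type*} [AddCommMonoid M] (f : Fin 3 → M)
    (hij : i ≠ j) (hil : i ≠ l) (hjl : j ≠ l) : ∑ k, f k = f i + f j + f l := by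
  have huniv : (Finset.univ : Finset (Fin 3)) = {i, j, l} := by decide +revert
  simp [huniv, hij, hil, hjl, add_assoc]

theorem adjugate_fin_three_apply_of_ne (hij : i ≠ j) (hil : i ≠ l) (hjl : j ≠ l) :
    A.adjugate i j = A i l * A l j - A i j * A l l := by
  rw [adjugate_fin_three]
  fin_cases i <;> fin_cases j <;> fin_cases l <;>
    first | contradiction | simp [sub_eq_add_neg, add_comm, mul_comm]

theorem adjugate_fin_three_eq_sq_sub :
    A.adjugate = A ^ 2 - A.trace • A + A.adjugate.trace • (1 : Matrix (Fin 3) (Fin 3) S) := by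
  ext i j
  fin_cases i <;> fin_cases j <;>
    simp [adjugate_fin_three, trace_fin_three, pow_two, mul_apply, Fin.sum_univ_three] <;> ring

theorem trace_sq_fin_three : A.trace ^ 2 = (A ^ 2).trace + 2 * A.adjugate.trace := by
  have htrace := congrArg trace (adjugate_fin_three_eq_sq_sub A)
  simp only [trace_add, trace_sub, trace_smul, trace_one, Fintype.card_fin, smul_eq_mul,
    Nat.cast_ofNat] at htrace
  linear_combination htrace

theorem mul_diagonal_mul_apply_fin_three (y : Fin 3 → S)
    (hij : i ≠ j) (hil : i ≠ l) (hjl : j ≠ l) :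
    (A * diagonal y * A) i j = A i j * (A.diag ⬝ᵥ y) + y l * A.adjugate i j := by
  simp only [mul_diagonal_mul_apply, dotProduct, diag_apply,
    sum_fin_three_of_ne _ hij hil hjl, adjugate_fin_three_apply_of_ne A hij hil hjl]
  ring

variable {A}

theorem adjugate_apply_of_sq_eq_zero (hA : A ^ 2 = 0) (hij : i ≠ j) :
    A.adjugate i j = -(A.trace * A i j) := by
  rw [adjugate_fin_three_eq_sq_sub, hA]
  simp [hij]

theorem trace_sq_mul_apply_eq_zero (hA : A ^ 2 = 0) (hij : i ≠ j) :
    A.trace ^ 2 * A i j = 0 := by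
  have hadj : A.adjugate.trace • A = A.det • (1 : Matrix (Fin 3) (Fin 3) S) := by
    rw [← adjugate_mul]
    conv_rhs => rw [adjugate_fin_three_eq_sq_sub A]
    simp [add_mul, ← pow_two, hA]
  have hzero : A.adjugate.trace * A i j = 0 := by
    simpa [hij] using congr_fun₂ hadj i j
  rw [trace_sq_fin_three, hA, trace_zero, zero_add, mul_assoc, hzero, mul_zero]

theorem mul_diagonal_mulVec_mul_apply (hA : A ^ 2 = 0) (hdiag : A.diag ᵥ* A = 0)
    (x : Fin 3 → S) (hij : i ≠ j) (hil : i ≠ l) (hjl : j ≠ l) :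
    (A * diagonal (A *ᵥ x) * A) i j = -(A.trace * A i j * (A *ᵥ x) l) := by
  rw [mul_diagonal_mul_apply_fin_three A _ hij hil hjl, dotProduct_mulVec, hdiag,
    adjugate_apply_of_sq_eq_zero hA hij, zero_dotProduct]
  ring

theorem mul_diagonal_mulVec_col_sq_mul_apply_eq_zero (hA : A ^ 2 = 0) (hdiag : A.diag ᵥ* A = 0)
    (hij : i ≠ j) : (A * diagonal (A *ᵥ (A.col i ^ 2)) * A) i j = 0 := by
  obtain ⟨l, hil, hjl⟩ := (by decide : ∀ i j : Fin 3, ∃ l, i ≠ l ∧ j ≠ l) i j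
  have hcol : (A *ᵥ (A.col i ^ 2)) l = -(A.trace * A l i * A j i) := calc
    (A *ᵥ (A.col i ^ 2)) l = (A * diagonal (A *ᵥ Pi.single i 1) * A) l i := by
      simp [mul_diagonal_mul_apply, mulVec, dotProduct, pow_two, mul_assoc]
    _ = -(A.trace * A l i * A j i) := by
      rw [mul_diagonal_mulVec_mul_apply hA hdiag _ hil.symm hjl.symm hij, mulVec_single_one,
        col_apply]
  calc (A * diagonal (A *ᵥ (A.col i ^ 2)) * A) i j
      = A.trace ^ 2 * A i j * (A l i * A j i) := by
        rw [mul_diagonal_mulVec_mul_apply hA hdiag _ hij hil hjl, hcol]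
        ring
    _ = 0 := by rw [trace_sq_mul_apply_eq_zero hA hij, zero_mul]

end FinThree

theorem pderiv_degLinMap23 (i k : Fin 3) :
    pderiv k (degLinMap23 i) =
      C ((1 : Matrix (Fin 3) (Fin 3) JacR3) i k) -
        C (2 * X (i, k)) * ∑ j, C (X (i, j)) * X j := by
  have hlinear : pderiv k (∑ j, C (X (i, j) : JacR3) * X j) = C (X (i, k)) := by
    simp [pderiv_X, Pi.single_apply]
  have hX : pderiv k (X i : MvPolynomial (Fin 3) JacR3) =
      C ((1 : Matrix (Fin 3) (Fin 3) JacR3) i k) := by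
    simp [pderiv_X, Pi.single_apply, Matrix.one_apply, apply_ite]
  rw [degLinMap23, map_sub, hX, pderiv_pow, hlinear, C_mul, map_ofNat]
  ring

theorem coeff_single_one_pderiv_degLinMap23 (i j k : Fin 3) :
    coeff (Finsupp.single j 1) (pderiv k (degLinMap23 i)) = -(2 * X (i, k) * X (i, j)) := by
  have hj : (0 : Fin 3 →₀ ℕ) ≠ Finsupp.single j 1 := by simp [eq_comm]
  rw [pderiv_degLinMap23, coeff_sub, coeff_C, if_neg hj, coeff_C_mul]
  simp [coeff_sum, coeff_X, Finsupp.single_left_inj]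

theorem coeff_single_one_jacPoly23 (j : Fin 3) :
    coeff (Finsupp.single j 1) jacPoly23 = -2 * (Amat3.diag ᵥ* Amat3) j := by
  rw [jacPoly23, coeff_single_one_det]
  · simp [coeff_single_one_pderiv_degLinMap23, vecMul, dotProduct, Amat3, Finset.mul_sum, mul_assoc]
  · ext1 i k
    simp [pderiv_degLinMap23]

theorem diag_vecMul_Amat3_mem_Jideal23 (j : Fin 3) : (Amat3.diag ᵥ* Amat3) j ∈ Jideal23 := by
  have hcoeff : coeff (Finsupp.single j 1) jacPoly23 ∈ Jideal23 :=
    Ideal.subset_span ⟨_, by simp, rfl⟩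
  have htwo : IsUnit (-2 : JacR3) := by
    simpa only [map_neg, map_ofNat] using
      (IsUnit.mk0 (-2 : ℚ) (by norm_num)).map (C : ℚ →+* JacR3)
  rwa [coeff_single_one_jacPoly23, Ideal.unit_mul_mem_iff_mem _ htwo] at hcoeff

theorem stmt17_general {i j : Fin 3} (hij : i ≠ j) :
    ∑ m : Fin 3, ∑ p : Fin 3, (X (i, m) : JacR3) * X (m, j) * X (m, p) * X (p, i) ^ 2 ∈
      Jideal23 + InilTwo := by
  let π := Ideal.Quotient.mk (Jideal23 + InilTwo)
  let B := π.mapMatrix Amat3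
  have hB : B ^ 2 = 0 := by
    ext k l
    rw [← map_pow]
    exact Ideal.Quotient.eq_zero_iff_mem.mpr
      (Ideal.mem_sup_right (Ideal.subset_span ⟨k, l, rfl⟩))
  have hdiag : B.diag ᵥ* B = 0 := by
    ext k
    exact (RingHom.map_vecMul π Amat3 Amat3.diag k).symm.trans
      (Ideal.Quotient.eq_zero_iff_mem.mpr
        (Ideal.mem_sup_left (diag_vecMul_Amat3_mem_Jideal23 k)))
  rw [← Ideal.Quotient.eq_zero_iff_mem,
    ← mul_diagonal_mulVec_col_sq_mul_apply_eq_zero hB hdiag hij]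
  simp only [mul_diagonal_mul_apply, mulVec, dotProduct, Finset.mul_sum, Finset.sum_mul, map_sum,
    map_mul, map_pow]
  refine Finset.sum_congr rfl fun m _ => Finset.sum_congr rfl fun p _ => ?_
  simp only [B, π, Amat3, RingHom.mapMatrix_apply, map_apply, col_apply, Pi.pow_apply]
  ring

/-- `z₁ ∈ J_{2,3} + I_{nil-2}`. -/
theorem stmt17 : zOne ∈ Jideal23 + InilTwo :=
  Ideal.mul_mem_left _ _ (stmt17_general (by decide))
end
end

section
/- Let n = 3 and d = 2, and set z₁ = a_{1,2} · Σ_{m=1}^{3} Σ_{p=1}^{3} a_{1,m} a_{m,3} a_{m,p} a_{p,1}² ∈ R (this is z(fern_{2,3}, μ) for the root-leaf labeling μ = (1,(2),(3),(1,1))). Let I_{char} be the ideal of R generated by the nonconstant coefficients of the characteristic polynomial of the matrix A = (a_{i,j}), namely the trace of A, the sum of the 2×2 principal minors of A, and det(A). Then z₁ lies in the ideal J_{2,3} + I_{char}. -/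
open MvPolynomial Matrix

noncomputable section

/-- `I_{char}`, the ideal generated by the nonconstant coefficients of the characteristic
polynomial of `A`: the trace of `A`, the sum of the `2×2` principal minors of `A`, and
`det A`. -/
def Ichar : Ideal JacR3 :=
  Ideal.span
    {Amat3.trace,
     (Amat3 0 0 * Amat3 1 1 - Amat3 0 1 * Amat3 1 0) +
       (Amat3 0 0 * Amat3 2 2 - Amat3 0 2 * Amat3 2 0) +
       (Amat3 1 1 * Amat3 2 2 - Amat3 1 2 * Amat3 2 1),
     Amat3.det}

/-!
Half of the Jacobian matrix of `x ↦ ((A x)_i ^ 2)_i` at `x` is `N x = diagonal (A x) * A`, and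
`N x y = N y x`. Modulo `J_{2,3}` every `N x` has characteristic polynomial `X ^ 3`, so that
`adjugate (-N x) = N x ^ 2`; modulo `det A` as well, `A * N x ^ 2` vanishes because
`A * adjugate A = 0`. Polarizing, `A * N x * N y * z` is antisymmetric in `x, y`, while it is
symmetric in `y, z`; hence it is zero, and `z₁` is a multiple of one of its coordinates.
-/

section SymmetricAntisymmetric

variable {α G : Type*} [AddGroup G] [IsAddTorsionFree G]

theorem eq_zero_of_swap_left_eq_neg_of_swap_right_eq {F : α → α → α → G}
    (swap_left : ∀ x y z, F y x z = -F x y z) (swap_right : ∀ x y z, F x z y = F x y z)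
    (x y z : α) : F x y z = 0 := by
  refine self_eq_neg.mp ?_
  calc F x y z = -F y x z := swap_left y x z
    _ = -F y z x := by rw [swap_right]
    _ = F z y x := (swap_left y z x).symm
    _ = F z x y := swap_right z x y
    _ = -F x z y := swap_left x z y
    _ = -F x y z := by rw [swap_right]

end SymmetricAntisymmetric

section CharpolyXPow

variable {n S : Type*} [Fintype n] [DecidableEq n] [CommRing S]

theorem charpoly_eq_X_pow_of_charpolyRev_eq_one {M : Matrix n n S} (hM : M.charpolyRev = 1) :
    M.charpoly = Polynomial.X ^ Fintype.card n := by
  nontriviality S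
  rw [← M.charpoly_natDegree_eq_dim, ← Polynomial.reflect_one, ← hM, ← M.reverse_charpoly,
    Polynomial.reverse, Polynomial.reflect_reflect]

theorem adjugate_charmatrix_of_charpoly_eq_X_pow {M : Matrix n n S}
    (hM : M.charpoly = Polynomial.X ^ Fintype.card n) :
    M.charmatrix.adjugate = ∑ i ∈ Finset.range (Fintype.card n),
      scalar n Polynomial.X ^ i * Polynomial.C.mapMatrix M ^ (Fintype.card n - 1 - i) := by
  set geomSum := ∑ i ∈ Finset.range (Fintype.card n),
    scalar n Polynomial.X ^ i * Polynomial.C.mapMatrix M ^ (Fintype.card n - 1 - i)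
  have pow_card_eq_zero : M ^ Fintype.card n = 0 := by
    simpa [hM] using M.aeval_self_charpoly
  have charmatrix_mul : M.charmatrix * geomSum = M.charpoly • 1 := by
    have comm := scalar_commute (Polynomial.X : Polynomial S) (Commute.all _)
      (Polynomial.C.mapMatrix M)
    rw [charmatrix, comm.mul_geom_sum₂, ← map_pow Polynomial.C.mapMatrix, pow_card_eq_zero,
      map_zero, sub_zero, hM, ← map_pow, scalar_apply, smul_one_eq_diagonal]
  have charpoly_smul : M.charpoly • geomSum = M.charpoly • M.charmatrix.adjugate := by
    rw [← mul_one M.charmatrix.adjugate, ← mul_smul_comm, ← charmatrix_mul, ← mul_assoc,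
      adjugate_mul, charpoly, smul_mul_assoc, one_mul]
  ext1 i j
  refine (M.charpoly_monic.isRegular.left ?_).symm
  exact congr_fun₂ charpoly_smul i j

theorem adjugate_neg_of_charpoly_eq_X_pow {M : Matrix n n S}
    (hM : M.charpoly = Polynomial.X ^ Fintype.card n) :
    (-M).adjugate = M ^ (Fintype.card n - 1) := by
  cases isEmpty_or_nonempty n
  · exact Subsingleton.elim _ _
  let evalZero := (Polynomial.evalRingHom (0 : S)).mapMatrix (m := n)
  have evalZero_scalar_X : evalZero (scalar n Polynomial.X) = 0 := by
    simp [evalZero, diagonal_map]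
  have evalZero_C : evalZero (Polynomial.C.mapMatrix M) = M := by
    ext i j
    simp [evalZero]
  have evalZero_charmatrix : evalZero M.charmatrix = -M := by
    rw [charmatrix, map_sub, evalZero_scalar_X, evalZero_C, zero_sub]
  rw [← evalZero_charmatrix, ← RingHom.map_adjugate, adjugate_charmatrix_of_charpoly_eq_X_pow hM,
    map_sum, Finset.sum_eq_single 0]
  · rw [pow_zero, one_mul, map_pow, evalZero_C, Nat.sub_zero]
  · intro i _ hi
    rw [map_mul, map_pow, evalZero_scalar_X, zero_pow hi, zero_mul]
  · simp

theorem mul_diagonal_mul_pow_eq_zero {A : Matrix n n S} (hA : A.det = 0) {w : n → S}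
    (hw : (diagonal w * A).charpolyRev = 1) :
    A * (diagonal w * A) ^ (Fintype.card n - 1) = 0 := by
  rw [← adjugate_neg_of_charpoly_eq_X_pow (charpoly_eq_X_pow_of_charpolyRev_eq_one hw),
    ← neg_mul, adjugate_mul_distrib, ← mul_assoc, mul_adjugate, hA, zero_smul, zero_mul]

end CharpolyXPow

section PolarMatrix

variable {n S : Type*} [Fintype n] [DecidableEq n] [CommRing S]

/-- Half of the Jacobian matrix of `x ↦ ((A x)_i ^ 2)_i` at `x`; equivalently, the matrix of
`y ↦ ((A x)_i * (A y)_i)_i`. -/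
def polarMatrix (A : Matrix n n S) (x : n → S) : Matrix n n S :=
  diagonal (A *ᵥ x) * A

theorem polarMatrix_add (A : Matrix n n S) (x y : n → S) :
    polarMatrix A (x + y) = polarMatrix A x + polarMatrix A y := by
  simp only [polarMatrix, mulVec_add, ← add_mul, diagonal_add]
  rfl

theorem polarMatrix_smul (A : Matrix n n S) (c : S) (x : n → S) :
    polarMatrix A (c • x) = c • polarMatrix A x := by
  simp only [polarMatrix, mulVec_smul, diagonal_smul, smul_mul_assoc]

theorem polarMatrix_map {T : Type*} [CommRing T] (f : S →+* T) (A : Matrix n n S) (x : n → S) :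
    polarMatrix (A.map f) (f ∘ x) = (polarMatrix A x).map f := by
  rw [polarMatrix, polarMatrix, Matrix.map_mul, diagonal_map (map_zero f)]
  congr 2
  ext i
  exact (f.map_mulVec A x i).symm

theorem polarMatrix_mulVec (A : Matrix n n S) (x y : n → S) :
    polarMatrix A x *ᵥ y = (A *ᵥ x) * (A *ᵥ y) := by
  ext i
  rw [polarMatrix, ← mulVec_mulVec, mulVec_diagonal, Pi.mul_apply]

theorem mul_polarMatrix_mul_polarMatrix_swap {A : Matrix n n S}
    (hA : ∀ x, A * polarMatrix A x ^ 2 = 0) (x y : n → S) :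
    A * polarMatrix A y * polarMatrix A x = -(A * polarMatrix A x * polarMatrix A y) := by
  have polarized := hA (x + y)
  have square_x := hA x
  have square_y := hA y
  rw [polarMatrix_add] at polarized
  simp only [sq, mul_add, add_mul, ← mul_assoc] at polarized square_x square_y
  rw [square_x, square_y, zero_add, add_zero] at polarized
  exact eq_neg_of_add_eq_zero_left polarized

theorem mul_polarMatrix_mul_polarMatrix_mulVec_eq_zero [IsAddTorsionFree S] {A : Matrix n n S}
    (hA : ∀ x, A * polarMatrix A x ^ 2 = 0) (x y z : n → S) :
    (A * polarMatrix A x * polarMatrix A y) *ᵥ z = 0 := by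
  refine eq_zero_of_swap_left_eq_neg_of_swap_right_eq
    (F := fun x y z ↦ (A * polarMatrix A x * polarMatrix A y) *ᵥ z) (fun x y z ↦ ?_)
    (fun x y z ↦ ?_) x y z
  · rw [mul_polarMatrix_mul_polarMatrix_swap hA, neg_mulVec]
  · simp only [← mulVec_mulVec _ _ (polarMatrix A _), polarMatrix_mulVec, mul_comm]

theorem sum_sum_mul_eq_zero_of_mul_polarMatrix_sq_eq_zero [IsAddTorsionFree S]
    {A : Matrix n n S} (hA : ∀ x, A * polarMatrix A x ^ 2 = 0) (i j k l : n) :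
    ∑ m, ∑ p, A i m * A m j * A m p * A p k * A p l = 0 := by
  have entry_eq_zero := congr_fun (mul_polarMatrix_mul_polarMatrix_mulVec_eq_zero hA
    (Pi.single j 1) (Pi.single k 1) (Pi.single l 1)) i
  rw [← mulVec_mulVec, ← mulVec_mulVec, polarMatrix_mulVec, polarMatrix_mulVec] at entry_eq_zero
  simp only [mulVec_single_one] at entry_eq_zero
  simpa only [mulVec, dotProduct, Pi.mul_apply, Pi.zero_apply, col_apply, Finset.mul_sum,
    mul_assoc] using entry_eq_zero

end PolarMatrix

section Jacobian

theorem eval₂_eq_of_forall_coeff_eq_zero {σ R T : Type*} [CommSemiring R] [CommSemiring T]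
    (ψ : R →+* T) {p : MvPolynomial σ R} (hp : ∀ α ≠ 0, ψ (coeff α p) = 0) (v : σ → T) :
    eval₂ ψ v p = ψ (coeff 0 p) := by
  classical
  have map_eq_C : map ψ p = C (ψ (coeff 0 p)) := by
    ext α
    rw [coeff_map, coeff_C]
    split_ifs with h
    · rw [h]
    · exact hp α (Ne.symm h)
  rw [← eval_map, map_eq_C, eval_C]

variable {T : Type*} [CommRing T]

theorem eval₂_pderiv_degLinMap23 (ψ : JacR3 →+* T) (v : Fin 3 → T) (i j : Fin 3) :
    eval₂ ψ v (pderiv j (degLinMap23 i)) =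
      (1 - (2 : T) • polarMatrix (Amat3.map ψ) v) i j := by
  have pderiv_linearForm : pderiv j (∑ k : Fin 3, C (X (i, k) : JacR3) * X k) = C (X (i, j)) := by
    simp [pderiv_X, Pi.single_apply]
  rw [degLinMap23, map_sub, pderiv_pow, pderiv_linearForm]
  simp [polarMatrix, Amat3, mulVec, dotProduct, pderiv_X, Pi.single_apply, one_apply,
    eq_comm (a := i), mul_assoc, apply_ite (eval₂ ψ v)]

theorem eval₂_jacPoly23 (ψ : JacR3 →+* T) (v : Fin 3 → T) :
    eval₂ ψ v jacPoly23 = (1 - (2 : T) • polarMatrix (Amat3.map ψ) v).det := by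
  rw [jacPoly23, ← coe_eval₂Hom, RingHom.map_det]
  congr 1
  ext i j
  exact eval₂_pderiv_degLinMap23 ψ v i j

theorem det_one_sub_two_smul_polarMatrix_eq_one {ψ : JacR3 →+* T} (hψ : Jideal23 ≤ RingHom.ker ψ)
    (v : Fin 3 → T) : (1 - (2 : T) • polarMatrix (Amat3.map ψ) v).det = 1 := by
  have coeff_eq_zero (α : Fin 3 →₀ ℕ) (hα : α ≠ 0) : ψ (coeff α jacPoly23) = 0 :=
    hψ (Ideal.subset_span ⟨α, hα, rfl⟩)
  rw [← eval₂_jacPoly23, eval₂_eq_of_forall_coeff_eq_zero ψ coeff_eq_zero,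
    ← eval₂_eq_of_forall_coeff_eq_zero ψ coeff_eq_zero 0, eval₂_jacPoly23]
  simp [polarMatrix]

theorem charpolyRev_polarMatrix_two_smul_eq_one {ψ : JacR3 →+* T} (hψ : Jideal23 ≤ RingHom.ker ψ)
    (v : Fin 3 → T) : (polarMatrix (Amat3.map ψ) ((2 : T) • v)).charpolyRev = 1 := by
  have hCψ : Jideal23 ≤ RingHom.ker (Polynomial.C.comp ψ) :=
    fun r hr ↦ by simpa [RingHom.mem_ker] using hψ hr
  -- At `t * v`, over `T[t]`, the Jacobian is a reversed characteristic polynomial.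
  have det_eq_one := det_one_sub_two_smul_polarMatrix_eq_one hCψ
    ((Polynomial.X : Polynomial T) • (Polynomial.C ∘ v))
  have map_eq : Amat3.map (Polynomial.C.comp ψ) = (Amat3.map ψ).map Polynomial.C := rfl
  rw [map_eq, polarMatrix_smul, polarMatrix_map, smul_comm] at det_eq_one
  rw [charpolyRev, polarMatrix_smul, ← det_eq_one]
  congr 3
  ext1 i j
  simp [map_ofNat]

theorem mul_polarMatrix_sq_eq_zero [IsAddTorsionFree T] {ψ : JacR3 →+* T}
    (hψ : Jideal23 ≤ RingHom.ker ψ) (hdet : ψ Amat3.det = 0) (x : Fin 3 → T) :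
    Amat3.map ψ * polarMatrix (Amat3.map ψ) x ^ 2 = 0 := by
  have det_map_eq_zero : (Amat3.map ψ).det = 0 := (ψ.map_det Amat3).symm.trans hdet
  have four_smul : (4 : ℕ) • (Amat3.map ψ * polarMatrix (Amat3.map ψ) x ^ 2) = 0 := by
    have scaled : Amat3.map ψ * polarMatrix (Amat3.map ψ) ((2 : T) • x) ^ 2 = 0 :=
      mul_diagonal_mul_pow_eq_zero det_map_eq_zero
        (charpolyRev_polarMatrix_two_smul_eq_one hψ x)
    rw [polarMatrix_smul, smul_pow, mul_smul_comm] at scaled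
    rw [← scaled, ← Nat.cast_smul_eq_nsmul T]
    norm_num
  ext i j
  exact (nsmul_eq_zero_iff_right four_ne_zero).mp (congr_fun₂ four_smul i j)

end Jacobian

theorem stmt18_general (i j k l : Fin 3) :
    ∑ m : Fin 3, ∑ p : Fin 3, X (i, m) * X (m, j) * X (m, p) * X (p, k) * X (p, l) ∈
      Jideal23 + Ideal.span {Amat3.det} := by
  let φ := Ideal.Quotient.mk (Jideal23 + Ideal.span {Amat3.det})
  have : IsAddTorsionFree (JacR3 ⧸ (Jideal23 + Ideal.span {Amat3.det})) := .of_module_rat _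
  have Jideal23_le_ker : Jideal23 ≤ RingHom.ker φ := by
    rw [Ideal.mk_ker]
    exact le_sup_left
  have det_eq_zero : φ Amat3.det = 0 :=
    Ideal.Quotient.eq_zero_iff_mem.mpr (Ideal.mem_sup_right (Ideal.mem_span_singleton_self _))
  have fern_eq_zero := sum_sum_mul_eq_zero_of_mul_polarMatrix_sq_eq_zero
    (mul_polarMatrix_sq_eq_zero Jideal23_le_ker det_eq_zero) i j k l
  rw [← Ideal.Quotient.eq_zero_iff_mem]
  simpa only [map_sum, map_mul, map_apply, Amat3] using fern_eq_zero

/-- `z₁ ∈ J_{2,3} + I_{char}`. -/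
theorem stmt18 : zOne ∈ Jideal23 + Ichar := by
  have span_det_le : Ideal.span {Amat3.det} ≤ Ichar := Ideal.span_mono (by simp)
  have fern_mem := sup_le_sup_left span_det_le Jideal23 (stmt18_general 0 2 0 0)
  simpa only [zOne, sq, ← mul_assoc, Submodule.add_eq_sup] using
    Ideal.mul_mem_left _ (X (0, 1)) fern_mem
end
end
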